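/- Let B_{i,j} : [0,T] → Mₙ(ℂ) be continuous for 1 ≤ i ≤ j ≤ m; for each i let U_i satisfy U_i(0) = I, U_i'(t) = B_{i,i}(t)·U_i(t), with U_i(t) invertible for every t. For s ≥ 2 and indices i₁, …, i_s define Int_{(i₁,…,i_s)}(t) = U_{i₁}(t)·∫₀ᵗ dt₁ ∫₀^{t₁} dt₂ ⋯ ∫₀^{t_{s−2}} dt_{s−1} U_{i₁}(t₁)⁻¹B_{i₁,i₂}(t₁)U_{i₂}(t₁) ⋯ U_{i_{s−1}}(t_{s−1})⁻¹B_{i_{s−1},i_s}(t_{s−1})U_{i_s}(t_{s−1}), and set Int_{(i)}(t) = U_i(t). Suppose C_{i,j} : [0,T] → Mₙ(ℂ) satisfy C_{s,s+j}'(t) = Σ_{i=0}^{j} B_{s,s+i}(t)·C_{s+i,s+j}(t) with C_{s,s}(0) = I and C_{s,s+j}(0) = 0 for j ≥ 1. Then for all 1 ≤ s ≤ m, 1 ≤ j ≤ m−s, and t ∈ [0,T]: C_{s,s+j}(t) = Int_{(s,s+j)}(t) + Σ_{r=1}^{j−1} Σ_{s < i₁ < ⋯ < i_r < s+j} Int_{(s,i₁,…,i_r,s+j)}(t),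 where the inner sum runs over all strictly increasing tuples of integers i₁ < ⋯ < i_r strictly between s and s+j. -/

import Mathlib

open MeasureTheory Set intervalIntegral

attribute [local instance] Matrix.linftyOpNormedAddCommGroup Matrix.linftyOpNormedRing
  Matrix.linftyOpNormedAlgebra

/-- The iterated (time-ordered simplex) integral
`nestedInt [M₁, …, M_k] t = ∫₀ᵗ dt₁ M₁(t₁) ∫₀^{t₁} dt₂ M₂(t₂) ⋯ ∫₀^{t_{k-1}} dt_k M_k(t_k)`. -/
noncomputable def nestedInt {n : ℕ} :
    List (ℝ → Matrix (Fin n) (Fin n) ℂ) → ℝ → Matrix (Fin n) (Fin n) ℂ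
  | [] => fun _ => 1
  | M :: Ms => fun t => ∫ τ in (0 : ℝ)..t, M τ * nestedInt Ms τ

/-- `intTuple B U [i₁, …, i_s] t` is the nested integral
`Int_{(i₁,…,i_s)}(t) = U_{i₁}(t) ∫₀ᵗ dt₁ ⋯ ∫₀^{t_{s-2}} dt_{s-1}
U_{i₁}⁻¹B_{i₁,i₂}U_{i₂}(t₁) ⋯ U_{i_{s-1}}⁻¹B_{i_{s-1},i_s}U_{i_s}(t_{s-1})`,
with `Int_{(i)}(t) = U_i(t)`. -/
noncomputable def intTuple {m n : ℕ}
    (B : Fin m → Fin m → ℝ → Matrix (Fin n) (Fin n) ℂ)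
    (U : Fin m → ℝ → Matrix (Fin n) (Fin n) ℂ) :
    List (Fin m) → ℝ → Matrix (Fin n) (Fin n) ℂ
  | [] => fun _ => 1
  | i :: l => fun t =>
      U i t * nestedInt
        (((i :: l).zip l).map fun p => fun τ => (U p.1 τ)⁻¹ * B p.1 p.2 τ * U p.2 τ) t

/-!
Variation of constants turns the equation for `C p q` into
`C p q t = U p t * ∫ τ in a..t, (U p τ)⁻¹ * (B p q τ * U q τ + ∑ k ∈ Ioo p q, B p k τ * C k q τ)`,
which determines `C p q` from the `C k q` with `p < k < q`. Splitting the increasing paths from `p`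
to `q` according to their first intermediate index `k` shows that the sum of the time-ordered
integrals over these paths satisfies the same recursion.
-/

open scoped Ring

section VariationOfConstants

variable {A : Type*} [NormedRing A]

theorem hasDerivWithinAt_ringInverse {𝕜 : Type*} [NontriviallyNormedField 𝕜]
    [HasSummableGeomSeries A] [NormedAlgebra 𝕜 A] {U : 𝕜 → A} {U' : A} {s : Set 𝕜} {t : 𝕜}
    (hU : HasDerivWithinAt U U' s t) (hUt : IsUnit (U t)) :
    HasDerivWithinAt (fun τ => (U τ)⁻¹ʳ) (-((U t)⁻¹ʳ * U' * (U t)⁻¹ʳ)) s t := by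
  obtain ⟨u, hu⟩ := hUt
  have hinv := hasFDerivAt_ringInverse (𝕜 := 𝕜) u
  rw [hu] at hinv
  refine (hinv.comp_hasDerivWithinAt t hU).congr_deriv ?_
  rw [← hu, Ring.inverse_unit]
  simp

theorem continuousOn_ringInverse [HasSummableGeomSeries A] {X : Type*} [TopologicalSpace X]
    {U : X → A} {s : Set X} (hU : ContinuousOn U s) (hUs : ∀ x ∈ s, IsUnit (U x)) :
    ContinuousOn (fun x => (U x)⁻¹ʳ) s := by
  intro x hx
  obtain ⟨u, hu⟩ := hUs x hx
  have hinv := NormedRing.inverse_continuousAt u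
  rw [hu] at hinv
  exact hinv.comp_continuousWithinAt (hU x hx)

variable [NormedAlgebra ℝ A] [CompleteSpace A] {a b t : ℝ}

theorem variation_of_constants {U K X F : ℝ → A}
    (hU : ∀ t ∈ Icc a b, HasDerivWithinAt U (K t * U t) (Icc a b) t)
    (hUinv : ∀ t ∈ Icc a b, IsUnit (U t))
    (hX : ∀ t ∈ Icc a b, HasDerivWithinAt X (K t * X t + F t) (Icc a b) t)
    (hF : ContinuousOn F (Icc a b)) (ht : t ∈ Icc a b) :
    X t = U t * ((U a)⁻¹ʳ * X a + ∫ τ in a..t, (U τ)⁻¹ʳ * F τ) := by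
  have hderiv : ∀ τ ∈ Icc a b,
      HasDerivWithinAt (fun τ => (U τ)⁻¹ʳ * X τ) ((U τ)⁻¹ʳ * F τ) (Icc a b) τ := by
    intro τ hτ
    refine ((hasDerivWithinAt_ringInverse (hU τ hτ) (hUinv τ hτ)).mul (hX τ hτ)).congr_deriv ?_
    rw [mul_assoc, mul_assoc (K τ), Ring.mul_inverse_cancel _ (hUinv τ hτ)]
    noncomm_ring
  have hsub : Icc a t ⊆ Icc a b := Icc_subset_Icc_right ht.2
  have hUcont : ContinuousOn U (Icc a b) := HasDerivWithinAt.continuousOn hU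
  have hftc : ∫ τ in a..t, (U τ)⁻¹ʳ * F τ = (U t)⁻¹ʳ * X t - (U a)⁻¹ʳ * X a :=
    integral_eq_sub_of_hasDerivAt_of_le ht.1
      ((HasDerivWithinAt.continuousOn hderiv).mono hsub)
      (fun τ hτ => (hderiv τ (hsub (Ioo_subset_Icc_self hτ))).hasDerivAt
        (Icc_mem_nhds hτ.1 (hτ.2.trans_le ht.2)))
      (((continuousOn_ringInverse hUcont hUinv).mul hF).mono hsub
        |>.intervalIntegrable_of_Icc ht.1)
  rw [hftc, add_sub_cancel, Ring.mul_inverse_cancel_left _ _ (hUinv t ht)]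

end VariationOfConstants

section PowersetSums

variable {α M : Type*} [AddCommMonoid M]

theorem sum_powerset_eq_empty_add_sum_powersetCard (s : Finset α) (f : Finset α → M) :
    ∑ S ∈ s.powerset, f S = f ∅ + ∑ r ∈ Finset.Icc 1 s.card, ∑ S ∈ s.powersetCard r, f S := by
  rw [Finset.sum_powerset, Finset.range_eq_Ico, Finset.sum_eq_sum_Ico_succ_bot (by omega),
    Finset.powersetCard_zero, Finset.sum_singleton]
  rfl

variable [LinearOrder α]

theorem sum_powerset_sort_eq_nil_add_sum_cons (s : Finset α) (f : List α → M) :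
    ∑ S ∈ s.powerset, f (S.sort (· ≤ ·)) =
      f [] + ∑ k ∈ s, ∑ S ∈ {x ∈ s | k < x}.powerset, f (k :: S.sort (· ≤ ·)) := by
  induction s using Finset.induction_on_min with
  | empty => simp
  | insert k s hk ih =>
    have hks : k ∉ s := fun h => lt_irrefl k (hk k h)
    have above_min : {x ∈ insert k s | k < x} = s := by grind
    have above_of_mem : ∀ j ∈ s, {x ∈ insert k s | j < x} = {x ∈ s | j < x} := by grind
    have sort_insert_min : ∀ S ∈ s.powerset,
        (insert k S).sort (· ≤ ·) = k :: S.sort (· ≤ ·) := fun S hS =>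
      have hSs := Finset.mem_powerset.1 hS
      Finset.sort_insert _ (fun j hj => (hk j (hSs hj)).le) fun h => hks (hSs h)
    rw [Finset.sum_powerset_insert hks, ih, Finset.sum_insert hks, above_min,
      Finset.sum_congr rfl fun S hS => congrArg f (sort_insert_min S hS),
      Finset.sum_congr rfl fun j hj => by rw [← above_of_mem j hj]]
    abel

variable [LocallyFiniteOrder α]

theorem sum_powerset_Ioo_sort (p q : α) (f : List α → M) :
    ∑ S ∈ (Finset.Ioo p q).powerset, f (S.sort (· ≤ ·)) =
      f [] + ∑ k ∈ Finset.Ioo p q, ∑ S ∈ (Finset.Ioo k q).powerset, f (k :: S.sort (· ≤ ·)) := by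
  rw [sum_powerset_sort_eq_nil_add_sum_cons]
  refine congrArg _ (Finset.sum_congr rfl fun k hk => ?_)
  have above_eq_Ioo : {x ∈ Finset.Ioo p q | k < x} = Finset.Ioo k q := by grind
  rw [above_eq_Ioo]

theorem sortedLT_cons_sort_append_singleton {p q : α} (hpq : p < q) {S : Finset α}
    (hS : S ⊆ Finset.Ioo p q) : (p :: (S.sort (· ≤ ·) ++ [q])).SortedLT := by
  have hsort := S.sortedLT_sort.pairwise
  rw [List.sortedLT_iff_pairwise]
  simp only [List.pairwise_cons, List.pairwise_append, List.mem_append, Finset.mem_sort,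
    List.mem_singleton]
  grind

end PowersetSums

section TimeOrderedIntegral

variable {ι A : Type*} [NormedRing A] [NormedAlgebra ℝ A]

/-- The time-ordered integral `Int_{(i, i₂, …, i_s)}` along the path `i :: [i₂, …, i_s]`, with
integration starting at `a`, for coefficients in a normed algebra. Keeping the first index apart
from the list rules out the empty path. -/
noncomputable def timeOrderedIntegral (B : ι → ι → ℝ → A) (U : ι → ℝ → A) (a : ℝ) :
    ι → List ι → ℝ → A
  | i, [] => U i
  | i, k :: l => fun t =>
      U i t * ∫ τ in a..t, (U i τ)⁻¹ʳ * (B i k τ * timeOrderedIntegral B U a k l τ)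

/-- The sum of the time-ordered integrals over all strictly increasing paths from `p` to `q`, a path
being given by its set of intermediate indices. -/
noncomputable def timeOrderedSum [LinearOrder ι] [LocallyFiniteOrder ι]
    (B : ι → ι → ℝ → A) (U : ι → ℝ → A) (a : ℝ) (p q : ι) (t : ℝ) : A :=
  ∑ S ∈ (Finset.Ioo p q).powerset, timeOrderedIntegral B U a p (S.sort (· ≤ ·) ++ [q]) t

variable [CompleteSpace A] {B : ι → ι → ℝ → A} {U : ι → ℝ → A} {a b t : ℝ}

theorem continuousOn_timeOrderedIntegral (hU : ∀ i, ContinuousOn (U i) (Icc a b))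
    (hUinv : ∀ i, ∀ t ∈ Icc a b, IsUnit (U i t)) {i : ι} {l : List ι}
    (hB : (i :: l).IsChain fun j k => ContinuousOn (B j k) (Icc a b)) :
    ContinuousOn (timeOrderedIntegral B U a i l) (Icc a b) := by
  induction l generalizing i with
  | nil => exact hU i
  | cons k l ih =>
    obtain ⟨hik, hkl⟩ := List.isChain_cons_cons.1 hB
    refine (hU i).mul ?_
    have hint : IntegrableOn
        (fun τ => (U i τ)⁻¹ʳ * (B i k τ * timeOrderedIntegral B U a k l τ)) (Icc a b) :=
      ((continuousOn_ringInverse (hU i) (hUinv i)).mul (hik.mul (ih hkl))).integrableOn_Icc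
    rcases le_total a b with hab | hba
    · rw [← uIcc_of_le hab] at hint ⊢
      exact continuousOn_primitive_interval hint
    · exact (subsingleton_Icc_of_ge hba).continuousOn _

variable [LinearOrder ι] [LocallyFiniteOrder ι]

theorem continuousOn_timeOrderedIntegral_sort
    (hB : ∀ i j, i < j → ContinuousOn (B i j) (Icc a b))
    (hU : ∀ i, ContinuousOn (U i) (Icc a b))
    (hUinv : ∀ i, ∀ t ∈ Icc a b, IsUnit (U i t)) {p q : ι} (hpq : p < q) {S : Finset ι}
    (hS : S ∈ (Finset.Ioo p q).powerset) :
    ContinuousOn (timeOrderedIntegral B U a p (S.sort (· ≤ ·) ++ [q])) (Icc a b) :=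
  continuousOn_timeOrderedIntegral hU hUinv <|
    (sortedLT_cons_sort_append_singleton hpq (Finset.mem_powerset.1 hS)).isChain.imp hB

theorem timeOrderedSum_eq_mul_integral (hB : ∀ i j, i < j → ContinuousOn (B i j) (Icc a b))
    (hU : ∀ i, ContinuousOn (U i) (Icc a b))
    (hUinv : ∀ i, ∀ t ∈ Icc a b, IsUnit (U i t)) {p q : ι} (hpq : p < q) (ht : t ∈ Icc a b) :
    timeOrderedSum B U a p q t = U p t * ∫ τ in a..t, (U p τ)⁻¹ʳ *
      (B p q τ * U q τ + ∑ k ∈ Finset.Ioo p q, B p k τ * timeOrderedSum B U a k q τ) := by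
  have hintegrable {k : ι} (hk : p < k) {f : ℝ → A} (hf : ContinuousOn f (Icc a b)) :
      IntervalIntegrable (fun τ => (U p τ)⁻¹ʳ * (B p k τ * f τ)) volume a t :=
    ((continuousOn_ringInverse (hU p) (hUinv p)).mul ((hB p k hk).mul hf)).mono
      (Icc_subset_Icc_right ht.2) |>.intervalIntegrable_of_Icc ht.1
  have first_index (k : ι) (hk : k ∈ Finset.Ioo p q) :
      ∑ S ∈ (Finset.Ioo k q).powerset,
        timeOrderedIntegral B U a p (k :: (S.sort (· ≤ ·) ++ [q])) t =
      U p t * ∫ τ in a..t, (U p τ)⁻¹ʳ * (B p k τ * timeOrderedSum B U a k q τ) := by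
    obtain ⟨hpk, hkq⟩ := Finset.mem_Ioo.1 hk
    simp only [timeOrderedSum, timeOrderedIntegral, Finset.mul_sum]
    rw [integral_finsetSum fun S hS =>
      hintegrable hpk (continuousOn_timeOrderedIntegral_sort hB hU hUinv hkq hS), Finset.mul_sum]
  have hintegrable_sum (k : ι) (hk : k ∈ Finset.Ioo p q) :
      IntervalIntegrable (fun τ => (U p τ)⁻¹ʳ * (B p k τ * timeOrderedSum B U a k q τ))
        volume a t :=
    hintegrable (Finset.mem_Ioo.1 hk).1 <| continuousOn_finsetSum _ fun S hS =>
      continuousOn_timeOrderedIntegral_sort hB hU hUinv (Finset.mem_Ioo.1 hk).2 hS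
  rw [timeOrderedSum,
    sum_powerset_Ioo_sort p q fun l => timeOrderedIntegral B U a p (l ++ [q]) t]
  simp only [List.nil_append, List.cons_append, mul_add, Finset.mul_sum]
  rw [Finset.sum_congr rfl first_index, ← Finset.mul_sum, ← integral_finsetSum hintegrable_sum,
    integral_add (hintegrable hpq (hU q))
      (by simpa only [Finset.sum_fn] using IntervalIntegrable.sum _ hintegrable_sum), mul_add]
  rfl

theorem eq_timeOrderedSum_of_eq_mul_integral
    (hB : ∀ i j, i < j → ContinuousOn (B i j) (Icc a b))
    (hU : ∀ i, ContinuousOn (U i) (Icc a b))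
    (hUinv : ∀ i, ∀ t ∈ Icc a b, IsUnit (U i t)) {C : ι → ι → ℝ → A}
    (hC : ∀ p q, p < q → ∀ t ∈ Icc a b, C p q t = U p t * ∫ τ in a..t, (U p τ)⁻¹ʳ *
      (B p q τ * U q τ + ∑ k ∈ Finset.Ioo p q, B p k τ * C k q τ))
    {p q : ι} (hpq : p < q) (ht : t ∈ Icc a b) : C p q t = timeOrderedSum B U a p q t := by
  induction hI : Finset.Ioo p q using Finset.strongInduction generalizing p t with
  | H I ih =>
    subst hI
    rw [hC p q hpq t ht, timeOrderedSum_eq_mul_integral hB hU hUinv hpq ht]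
    refine congrArg (U p t * ·) (integral_congr fun τ hτ => ?_)
    rw [uIcc_of_le ht.1] at hτ
    have hstep : ∀ k ∈ Finset.Ioo p q, C k q τ = timeOrderedSum B U a k q τ := by
      intro k hk
      obtain ⟨hpk, hkq⟩ := Finset.mem_Ioo.1 hk
      have hssub : Finset.Ioo k q ⊂ Finset.Ioo p q :=
        Finset.ssubset_iff_of_subset (Finset.Ioo_subset_Ioo_left hpk.le) |>.2 ⟨k, hk, by simp⟩
      exact ih _ hssub hkq ⟨hτ.1, hτ.2.trans ht.2⟩ rfl
    exact congrArg (fun x => (U p τ)⁻¹ʳ * (B p q τ * U q τ + x))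
      (Finset.sum_congr rfl fun k hk => congrArg (B p k τ * ·) (hstep k hk))

end TimeOrderedIntegral

section BlockSystem

variable {ι A : Type*} [LinearOrder ι] [LocallyFiniteOrder ι] [NormedRing A] [NormedAlgebra ℝ A]
  [CompleteSpace A] {B C : ι → ι → ℝ → A} {U : ι → ℝ → A} {a b : ℝ}

theorem block_eq_mul_add_integral (hB : ∀ i j, i < j → ContinuousOn (B i j) (Icc a b))
    (hU : ∀ i, ∀ t ∈ Icc a b, HasDerivWithinAt (U i) (B i i t * U i t) (Icc a b) t)
    (hUinv : ∀ i, ∀ t ∈ Icc a b, IsUnit (U i t))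
    (hC : ∀ i j, i ≤ j → ∀ t ∈ Icc a b,
      HasDerivWithinAt (C i j) (∑ k ∈ Finset.Icc i j, B i k t * C k j t) (Icc a b) t)
    {p q : ι} (hpq : p ≤ q) {t : ℝ} (ht : t ∈ Icc a b) :
    C p q t = U p t * ((U p a)⁻¹ʳ * C p q a +
      ∫ τ in a..t, (U p τ)⁻¹ʳ * ∑ k ∈ Finset.Ioc p q, B p k τ * C k q τ) := by
  refine variation_of_constants (hU p) (hUinv p) (fun τ hτ => ?_) ?_ ht
  · refine (hC p q hpq τ hτ).congr_deriv ?_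
    rw [← Finset.Ioc_insert_left hpq, Finset.sum_insert Finset.left_notMem_Ioc]
  · refine continuousOn_finsetSum _ fun k hk => ?_
    obtain ⟨hpk, hkq⟩ := Finset.mem_Ioc.1 hk
    exact (hB p k hpk).mul (HasDerivWithinAt.continuousOn (hC k q hkq))

theorem statement9_general (hB : ∀ i j, i < j → ContinuousOn (B i j) (Icc a b))
    (hU : ∀ i, ∀ t ∈ Icc a b, HasDerivWithinAt (U i) (B i i t * U i t) (Icc a b) t)
    (hUinv : ∀ i, ∀ t ∈ Icc a b, IsUnit (U i t))
    (hCdiag : ∀ i, C i i a = U i a) (hCoff : ∀ i j, i < j → C i j a = 0)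
    (hC : ∀ i j, i ≤ j → ∀ t ∈ Icc a b,
      HasDerivWithinAt (C i j) (∑ k ∈ Finset.Icc i j, B i k t * C k j t) (Icc a b) t)
    {p q : ι} (hpq : p < q) {t : ℝ} (ht : t ∈ Icc a b) :
    C p q t = timeOrderedIntegral B U a p [q] t +
      ∑ r ∈ Finset.Icc 1 (Finset.Ioo p q).card, ∑ S ∈ Finset.powersetCard r (Finset.Ioo p q),
        timeOrderedIntegral B U a p (S.sort (· ≤ ·) ++ [q]) t := by
  have hUcont : ∀ i, ContinuousOn (U i) (Icc a b) := fun i => HasDerivWithinAt.continuousOn (hU i)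
  have hdiag : ∀ q, ∀ t ∈ Icc a b, C q q t = U q t := by
    intro q t ht
    rw [block_eq_mul_add_integral hB hU hUinv hC le_rfl ht, hCdiag,
      Ring.inverse_mul_cancel _ (hUinv q a ⟨le_rfl, ht.1.trans ht.2⟩)]
    simp
  have hoff : ∀ p q, p < q → ∀ t ∈ Icc a b, C p q t = U p t * ∫ τ in a..t, (U p τ)⁻¹ʳ *
      (B p q τ * U q τ + ∑ k ∈ Finset.Ioo p q, B p k τ * C k q τ) := by
    intro p q hpq t ht
    rw [block_eq_mul_add_integral hB hU hUinv hC hpq.le ht, hCoff p q hpq, mul_zero, zero_add]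
    refine congrArg (U p t * ·) (integral_congr fun τ hτ => ?_)
    rw [uIcc_of_le ht.1] at hτ
    simp only [← Finset.Ioo_insert_right hpq, Finset.sum_insert Finset.right_notMem_Ioo,
      hdiag q τ ⟨hτ.1, hτ.2.trans ht.2⟩]
  rw [eq_timeOrderedSum_of_eq_mul_integral hB hUcont hUinv hoff hpq ht, timeOrderedSum,
    sum_powerset_eq_empty_add_sum_powersetCard, Finset.sort_empty, List.nil_append]

end BlockSystem

theorem intTuple_cons {m n : ℕ} (B : Fin m → Fin m → ℝ → Matrix (Fin n) (Fin n) ℂ)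
    (U : Fin m → ℝ → Matrix (Fin n) (Fin n) ℂ) (i : Fin m) (l : List (Fin m)) :
    intTuple B U (i :: l) = timeOrderedIntegral B U 0 i l := by
  induction l generalizing i with
  | nil =>
    funext t
    simp [intTuple, nestedInt, timeOrderedIntegral]
  | cons k l ih =>
    simp only [timeOrderedIntegral, ← ih, intTuple, List.zip_cons_cons, List.map_cons, nestedInt,
      Matrix.nonsing_inv_eq_ringInverse, mul_assoc]

/-- explicit form of Theorem 1. If the blocks `C i j` solve the coupled
block system of the upper-triangular IVP, with `U i` the (invertible) propagator of `B i i`,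
then for `p < q`,
`C p q t = Int_{(p,q)}(t) + ∑_{r=1}^{q-p-1} ∑_{p < i₁ < ⋯ < i_r < q} Int_{(p,i₁,…,i_r,q)}(t)`,
the inner sum ranging over all strictly increasing `r`-tuples strictly between `p` and `q`
(identified with `r`-element subsets of the open interval, listed in increasing order). -/
theorem statement9 {m n : ℕ} {T : ℝ} (hT : 0 < T)
    (B C : Fin m → Fin m → ℝ → Matrix (Fin n) (Fin n) ℂ)
    (U : Fin m → ℝ → Matrix (Fin n) (Fin n) ℂ)
    (hB : ∀ i j : Fin m, i ≤ j → ContinuousOn (B i j) (Icc 0 T))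
    (hU0 : ∀ i, U i 0 = 1)
    (hU : ∀ i, ∀ t ∈ Icc (0 : ℝ) T,
      HasDerivWithinAt (U i) (B i i t * U i t) (Icc 0 T) t)
    (hUinv : ∀ i, ∀ t ∈ Icc (0 : ℝ) T, IsUnit (U i t))
    (hC0diag : ∀ i : Fin m, C i i 0 = 1)
    (hC0 : ∀ i j : Fin m, i < j → C i j 0 = 0)
    (hCsys : ∀ i j : Fin m, i ≤ j → ∀ t ∈ Icc (0 : ℝ) T,
      HasDerivWithinAt (C i j) (∑ k ∈ Finset.Icc i j, B i k t * C k j t) (Icc 0 T) t) :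
    ∀ p q : Fin m, p < q → ∀ t ∈ Icc (0 : ℝ) T,
      C p q t =
        intTuple B U [p, q] t +
        ∑ r ∈ Finset.Icc 1 ((q : ℕ) - (p : ℕ) - 1),
          ∑ S ∈ Finset.powersetCard r (Finset.Ioo p q),
            intTuple B U (p :: (S.sort (· ≤ ·) ++ [q])) t := by
  intro p q hpq t ht
  simpa only [intTuple_cons, Fin.card_Ioo] using
    statement9_general (fun i j hij => hB i j hij.le) hU hUinv
      (fun i => (hC0diag i).trans (hU0 i).symm) hC0 hCsys hpq ht
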